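/- Let G = (V,E) be a finite simple graph with a decomposition (A,C,B), and suppose there exist vertices v_1 ∈ A and v_2 ∈ B adjacent to every vertex of C. Let α ∈ ℝ and let f = ψ_α or f = φ_α. Then f[−] preserves positivity on P_G if and only if either: (1) α is an odd positive integer in case f = ψ_α, respectively an even positive integer in case f = φ_α; or (2) f[−] preserves positivity on P_{G_{A∪C}} and on P_{G_{B∪C}}, and |α| ≥ |C|. -/

import Mathlib

open Set Matrix

noncomputable section

/-- Entrywise power function `x ↦ x^α` on nonnegative reals, with the convention `0^α := 0`. -/
def powEnt (α x : ℝ) : ℝ := if x = 0 then 0 else x ^ α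

/-- The odd extension `ψ_α(x) = sgn(x)|x|^α` of the power function, with `ψ_α(0) = 0`. -/
def psiF (α x : ℝ) : ℝ := Real.sign x * |x| ^ α

/-- The even extension `φ_α(x) = |x|^α` of the power function, with `φ_α(0) = 0`. -/
def phiF (α x : ℝ) : ℝ := if x = 0 then 0 else |x| ^ α

/-- `P_G(I)`: positive semidefinite matrices with entries in `I` and zeros outside
the edge pattern of `G`. -/
def PsetG {V : Type*} [Fintype V] (G : SimpleGraph V) (I : Set ℝ) :
    Set (Matrix V V ℝ) :=
  {A | A.PosSemidef ∧ (∀ i j, A i j ∈ I) ∧ ∀ i j, i ≠ j → ¬ G.Adj i j → A i j = 0}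

/-- `H_G`: the set of entrywise powers preserving `P_G([0,∞))`. -/
def HsetG {V : Type*} [Fintype V] (G : SimpleGraph V) : Set ℝ :=
  {α | ∀ A ∈ PsetG G (Ici (0 : ℝ)), A.map (powEnt α) ∈ PsetG G univ}

/-- `H_G^ψ`: the set of powers `α` such that `ψ_α` preserves `P_G(ℝ)`. -/
def HsetPsi {V : Type*} [Fintype V] (G : SimpleGraph V) : Set ℝ :=
  {α | ∀ A ∈ PsetG G univ, A.map (psiF α) ∈ PsetG G univ}

/-- `H_G^φ`: the set of powers `α` such that `φ_α` preserves `P_G(ℝ)`. -/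
def HsetPhi {V : Type*} [Fintype V] (G : SimpleGraph V) : Set ℝ :=
  {α | ∀ A ∈ PsetG G univ, A.map (phiF α) ∈ PsetG G univ}

/-- The set of which the critical exponent is the least element:
all `α` such that every `β ≥ α` lies in `H`. -/
def CEset (H : Set ℝ) : Set ℝ := {α | ∀ β, α ≤ β → β ∈ H}

/-- The positive integers, as a set of reals. -/
def posNats : Set ℝ := {x | ∃ k : ℕ, 0 < k ∧ x = k}

/-- The odd positive integers `−1+2ℕ`, as a set of reals. -/
def oddNats : Set ℝ := {x | ∃ k : ℕ, 0 < k ∧ x = 2 * k - 1}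

/-- The even positive integers `2ℕ`, as a set of reals. -/
def evenNats : Set ℝ := {x | ∃ k : ℕ, 0 < k ∧ x = 2 * k}

/-- A decomposition `(A,C,B)` of a graph `G`: a partition of the vertices such that `C`
separates `A` from `B` (every walk from `A` to `B` meets `C`) and `C` induces a complete
subgraph. -/
def IsDecomposition {V : Type*} (G : SimpleGraph V) (A C B : Set V) : Prop :=
  (∀ v, v ∈ A ∨ v ∈ C ∨ v ∈ B) ∧
  Disjoint A C ∧ Disjoint A B ∧ Disjoint C B ∧
  (∀ a ∈ A, ∀ b ∈ B, ∀ p : G.Walk a b, ∃ c ∈ C, c ∈ p.support) ∧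
  (∀ c₁ ∈ C, ∀ c₂ ∈ C, c₁ ≠ c₂ → G.Adj c₁ c₂)

/-- `P_{G_S}` for a subset `S` of the vertices, identified with full-size matrices by padding
with zeros: positive semidefinite matrices supported on `S × S` whose zero pattern respects
the (induced subgraph of the) graph `G`. -/
def PsetSub {V : Type*} [Fintype V] (G : SimpleGraph V) (S : Set V) :
    Set (Matrix V V ℝ) :=
  {M | M.PosSemidef ∧ (∀ i j, (i ∉ S ∨ j ∉ S) → M i j = 0) ∧
    ∀ i j, i ≠ j → ¬ G.Adj i j → M i j = 0}

/-!
Write `f` for the power and `m = |C|`.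

A matrix `M ∈ P_G` splits along the decomposition as `M = M₁ + M₂` with `M₁` supported on `A ∪ C`
and `M₂` on `B ∪ C`, and `f[M] - f[M₁] - f[M₂]` lives on the clique `C`. Hence positivity on the two
pieces gives positivity on `P_G` as soon as `f` is Loewner superadditive on `m × m` matrices. For
`m ≥ 2` and `α > m` this holds because `f''` is a nonnegative multiple of a power of exponent
`α - 2 > m - 2`, which preserves positivity of `m × m` matrices (FitzGerald–Horn); the case `α = m`
is a limit.

Conversely, the Schur complement of the block of `v₁, v₂` in `f[p pᵀ + q qᵀ]`, with `p` and `q`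
supported on the cliques `C ∪ {v₁}` and `C ∪ {v₂}`, shows that preservation on `P_G` forces
superadditivity on rank-one matrices `u uᵀ`, `v vᵀ`. Take `u = 1` and `v = s x` with `s → 0`, and
test against weights `w` annihilating the monomials of degrees `1, …, m - 1` at the nodes `x`. If
`α < m`, comparing orders in `s` gives `∑ wᵢ f(xᵢ) = 0`. For the nodes `(-2) ^ i`, `i < m`, and the
coefficients of `∏ (X - (-2) ^ k)`, `1 ≤ k < m`, as weights, this reads `∏ (f(-2) - (-2) ^ k) = 0`,
so `f(-2)` is a power of `-2` and `f` is a monomial.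
-/

section RpowExt

/-- The extension to `ℝ` of the power `x ↦ x ^ α` on `(0, ∞)` which vanishes at `0` and satisfies
`f (-x) = ε * f x`. The signs `ε = 1` and `ε = -1` give `phiF α` and `psiF α`. -/
def rpowExt (ε : ℤˣ) (α x : ℝ) : ℝ :=
  if x = 0 then 0 else if 0 < x then x ^ α else (ε : ℤ) * (-x) ^ α

variable (ε : ℤˣ) (α : ℝ)

@[simp] lemma rpowExt_zero : rpowExt ε α 0 = 0 := if_pos rfl

lemma rpowExt_of_pos {x : ℝ} (hx : 0 < x) : rpowExt ε α x = x ^ α := by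
  simp only [rpowExt, hx.ne', hx, if_false, if_true]

@[simp] lemma rpowExt_one : rpowExt ε α 1 = 1 := by simp [rpowExt_of_pos]

lemma rpowExt_neg (x : ℝ) : rpowExt ε α (-x) = (ε : ℤ) * rpowExt ε α x := by
  rcases lt_trichotomy x 0 with hx | rfl | hx
  · rcases Int.units_eq_one_or ε with rfl | rfl <;> simp [rpowExt, hx, hx.ne, hx.le.not_gt]
  · simp
  · simp [rpowExt, hx, hx.ne', hx.le.not_gt]

lemma phiF_eq_rpowExt : phiF α = rpowExt 1 α := by
  funext x
  rcases lt_trichotomy x 0 with hx | rfl | hx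
  · simp [phiF, rpowExt, hx.ne, hx.le.not_gt, abs_of_neg hx]
  · simp [phiF]
  · simp [phiF, rpowExt_of_pos, hx, hx.ne', abs_of_pos hx]

lemma psiF_eq_rpowExt : psiF α = rpowExt (-1) α := by
  funext x
  rcases lt_trichotomy x 0 with hx | rfl | hx
  · simp [psiF, rpowExt, hx.ne, hx.le.not_gt, abs_of_neg hx, Real.sign_of_neg hx]
  · simp [psiF]
  · simp [psiF, rpowExt_of_pos, hx, abs_of_pos hx, Real.sign_of_pos hx]

lemma exists_eq_rpowExt {f : ℝ → ℝ} (hf : f = psiF α ∨ f = phiF α) : ∃ ε, f = rpowExt ε α :=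
  hf.elim (fun h => ⟨-1, h.trans (psiF_eq_rpowExt α)⟩) fun h => ⟨1, h.trans (phiF_eq_rpowExt α)⟩

lemma abs_rpowExt {x : ℝ} (hx : x ≠ 0) : |rpowExt ε α x| = |x| ^ α := by
  rcases hx.lt_or_gt with hx | hx
  · rcases Int.units_eq_one_or ε with rfl | rfl <;>
      simp [rpowExt, hx.ne, hx.le.not_gt, abs_of_neg hx, abs_of_pos, Real.rpow_pos_of_pos, hx]
  · rw [rpowExt_of_pos ε α hx, Real.abs_rpow_of_nonneg hx.le]

lemma rpowExt_mul (x y : ℝ) : rpowExt ε α (x * y) = rpowExt ε α x * rpowExt ε α y := by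
  have of_pos_left : ∀ {x : ℝ}, 0 < x → ∀ y,
      rpowExt ε α (x * y) = rpowExt ε α x * rpowExt ε α y := fun {x} hx y => by
    have of_pos : ∀ {y : ℝ}, 0 < y → rpowExt ε α (x * y) = rpowExt ε α x * rpowExt ε α y :=
      fun {y} hy => by
        rw [rpowExt_of_pos _ _ (mul_pos hx hy), rpowExt_of_pos _ _ hx, rpowExt_of_pos _ _ hy,
          Real.mul_rpow hx.le hy.le]
    rcases lt_trichotomy y 0 with hy | rfl | hy
    · rw [← neg_neg y, mul_neg, rpowExt_neg, of_pos (neg_pos.2 hy), rpowExt_neg ε α (-y)]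
      ring
    · simp
    · exact of_pos hy
  rcases lt_trichotomy x 0 with hx | rfl | hx
  · rw [← neg_neg x, neg_mul, rpowExt_neg, of_pos_left (neg_pos.2 hx), rpowExt_neg ε α (-x),
      mul_assoc]
  · simp
  · exact of_pos_left hx y

lemma continuous_rpowExt_exponent (x : ℝ) : Continuous fun α => rpowExt ε α x := by
  unfold rpowExt
  split_ifs with h₀ hpos
  · exact continuous_const
  · exact Real.continuous_const_rpow h₀
  · exact (Real.continuous_const_rpow (neg_ne_zero.2 h₀)).const_mul _

variable {α}

lemma monotoneOn_rpowExt (hα : 0 ≤ α) : MonotoneOn (rpowExt ε α) (Ici 0) := by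
  intro x (hx : 0 ≤ x) y _ hxy
  rcases hx.eq_or_lt with rfl | hx
  · rcases hxy.eq_or_lt with rfl | hy
    · rfl
    · rw [rpowExt_zero, rpowExt_of_pos ε α hy]; positivity
  · rw [rpowExt_of_pos ε α hx, rpowExt_of_pos ε α (hx.trans_le hxy)]
    exact Real.rpow_le_rpow hx.le hxy hα

lemma rpowExt_add_le (hα : 1 ≤ α) {x y : ℝ} (hx : 0 ≤ x) (hy : 0 ≤ y) :
    rpowExt ε α x + rpowExt ε α y ≤ rpowExt ε α (x + y) := by
  rcases hx.eq_or_lt with rfl | hx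
  · simp
  rcases hy.eq_or_lt with rfl | hy
  · simp
  rw [rpowExt_of_pos ε α hx, rpowExt_of_pos ε α hy, rpowExt_of_pos ε α (add_pos hx hy)]
  exact Real.add_rpow_le_rpow_add hx.le hy.le hα

lemma hasDerivAt_rpowExt_zero (hα : 1 < α) : HasDerivAt (rpowExt ε α) 0 0 := by
  have h := hasDerivAt_abs_rpow 0 hα
  rw [mul_zero, hasDerivAt_iff_isLittleO] at h
  rw [hasDerivAt_iff_isLittleO]
  refine (Asymptotics.isBigO_of_le _ fun y => ?_).trans_isLittleO h
  rcases eq_or_ne y 0 with rfl | hy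
  · simp
  · simp [abs_rpowExt ε α hy, Real.zero_rpow (by linarith : α ≠ 0), Real.abs_rpow_of_nonneg]

lemma hasDerivAt_rpowExt (hα : 1 < α) (x : ℝ) :
    HasDerivAt (rpowExt ε α) (α * rpowExt (-ε) (α - 1) x) x := by
  have of_pos : ∀ {y : ℝ}, 0 < y →
      HasDerivAt (rpowExt ε α) (α * rpowExt (-ε) (α - 1) y) y := fun {y} hy => by
    rw [rpowExt_of_pos _ _ hy]
    refine (Real.hasDerivAt_rpow_const (Or.inl hy.ne')).congr_of_eventuallyEq ?_
    filter_upwards [lt_mem_nhds hy] with z hz using rpowExt_of_pos ε α hz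
  rcases lt_trichotomy x 0 with hx | rfl | hx
  · have h := ((of_pos (neg_pos.2 hx)).comp x (hasDerivAt_neg x)).const_mul ((ε : ℤ) : ℝ)
    have hsq : ((ε : ℤ) : ℝ) * (ε : ℤ) = 1 := by exact_mod_cast Int.units_coe_mul_self ε
    have hfun : (fun y => ((ε : ℤ) : ℝ) * (rpowExt ε α ∘ Neg.neg) y) = rpowExt ε α := by
      funext y
      rw [Function.comp_apply, ← rpowExt_neg, neg_neg]
    rw [hfun] at h
    refine h.congr_deriv ?_
    rw [rpowExt_neg, Units.val_neg, Int.cast_neg]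
    linear_combination (α * rpowExt (-ε) (α - 1) x) * hsq
  · simpa using hasDerivAt_rpowExt_zero ε hα
  · exact of_pos hx

variable {ε}

lemma rpowExt_eq_pow_iff {d : ℕ} :
    rpowExt ε α = (· ^ d) ↔ d ≠ 0 ∧ α = d ∧ ((ε : ℤ) : ℝ) = (-1) ^ d := by
  constructor
  · intro h
    refine ⟨?_, ?_, ?_⟩
    · rintro rfl
      simpa using congrFun h 0
    · have h2 := congrFun h 2
      rw [rpowExt_of_pos ε α two_pos, ← Real.rpow_natCast] at h2
      exact (Real.rpow_right_inj two_pos (by norm_num)).1 h2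
    · simpa [rpowExt_neg] using congrFun h (-1)
  · rintro ⟨hd, rfl, hε⟩
    funext x
    rcases lt_trichotomy x 0 with hx | rfl | hx
    · rw [← neg_neg x, rpowExt_neg, rpowExt_of_pos ε _ (neg_pos.2 hx), Real.rpow_natCast, hε,
        neg_pow (-x)]
    · simp [hd]
    · rw [rpowExt_of_pos ε _ hx, Real.rpow_natCast]

lemma rpowExt_eq_pow_of_apply_neg_two {d : ℕ} (hd : d ≠ 0) (h : rpowExt ε α (-2) = (-2) ^ d) :
    rpowExt ε α = (· ^ d) := by
  have hα : α = d := by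
    have habs := congrArg abs h
    rw [abs_rpowExt ε α (by norm_num), abs_pow, abs_neg, abs_two, ← Real.rpow_natCast] at habs
    exact (Real.rpow_right_inj two_pos (by norm_num)).1 habs
  refine rpowExt_eq_pow_iff.2 ⟨hd, hα, ?_⟩
  rw [rpowExt_neg, rpowExt_of_pos ε α two_pos, hα, Real.rpow_natCast, neg_pow] at h
  exact mul_right_cancel₀ (by positivity) h

lemma exists_psiF_eq_pow_iff : (∃ d : ℕ, psiF α = (· ^ d)) ↔ α ∈ oddNats := by
  simp only [psiF_eq_rpowExt, rpowExt_eq_pow_iff]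
  constructor
  · rintro ⟨d, -, rfl, hd⟩
    rcases Nat.even_or_odd d with he | ⟨k, rfl⟩
    · norm_num [he.neg_one_pow] at hd
    · exact ⟨k + 1, k.succ_pos, by push_cast; ring⟩
  · rintro ⟨k, hk, rfl⟩
    obtain ⟨k, rfl⟩ := Nat.exists_eq_add_of_lt hk
    exact ⟨2 * k + 1, by lia, by push_cast; ring, by simp [(odd_two_mul_add_one k).neg_one_pow]⟩

lemma exists_phiF_eq_pow_iff : (∃ d : ℕ, phiF α = (· ^ d)) ↔ α ∈ evenNats := by
  simp only [phiF_eq_rpowExt, rpowExt_eq_pow_iff]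
  constructor
  · rintro ⟨d, hd₀, rfl, hd⟩
    rcases Nat.even_or_odd' d with ⟨k, rfl | rfl⟩
    · exact ⟨k, by lia, by push_cast; ring⟩
    · norm_num [(odd_two_mul_add_one k).neg_one_pow] at hd
  · rintro ⟨k, hk, rfl⟩
    exact ⟨2 * k, by lia, by push_cast; ring, by simp⟩

lemma exists_eq_pow_iff {f : ℝ → ℝ} (hf : f = psiF α ∨ f = phiF α) :
    (∃ d : ℕ, f = (· ^ d)) ↔
      (f = psiF α ∧ α ∈ oddNats) ∨ (f = phiF α ∧ α ∈ evenNats) := by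
  constructor
  · intro hd
    rcases hf with rfl | rfl
    · exact .inl ⟨rfl, exists_psiF_eq_pow_iff.1 hd⟩
    · exact .inr ⟨rfl, exists_phiF_eq_pow_iff.1 hd⟩
  · rintro (⟨rfl, hα⟩ | ⟨rfl, hα⟩)
    exacts [exists_psiF_eq_pow_iff.2 hα, exists_phiF_eq_pow_iff.2 hα]

end RpowExt

section PosSemidef

variable {n : Type*} {M : Matrix n n ℝ}

lemma posSemidef_vecMulVec_self [Finite n] (u : n → ℝ) : (vecMulVec u u).PosSemidef := by
  simpa using posSemidef_vecMulVec_self_star u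

lemma posSemidef_iff_sum_nonneg [Fintype n] :
    M.PosSemidef ↔ M.IsHermitian ∧ ∀ x : n → ℝ, 0 ≤ ∑ i, ∑ j, x i * M i j * x j := by
  simp [posSemidef_iff_dotProduct_mulVec, dotProduct, mulVec, Finset.mul_sum, mul_assoc]

lemma isClosed_setOf_posSemidef : IsClosed {M : Matrix n n ℝ | M.PosSemidef} := by
  simp only [PosSemidef, IsHermitian, ofPred_and, ofPred_forall, Finsupp.sum]
  exact (isClosed_eq (by fun_prop) continuous_id).inter <|
    isClosed_iInter fun x => isClosed_le continuous_const (by fun_prop)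

lemma posSemidef_of_subsingleton [Subsingleton n] (h : ∀ i, 0 ≤ M i i) : M.PosSemidef := by
  classical
  have hM : M = diagonal M.diag := by
    ext i j
    rw [Subsingleton.elim j i, diagonal_apply_eq, diag_apply]
  exact hM ▸ PosSemidef.diagonal h

lemma posSemidef_of_submatrix [Finite n] {S : Set n} (h₀ : ∀ i j, i ∉ S ∨ j ∉ S → M i j = 0)
    (hS : (M.submatrix ((↑) : S → n) (↑)).PosSemidef) : M.PosSemidef := by
  classical
  have := Fintype.ofFinite n
  rw [posSemidef_iff_sum_nonneg] at hS ⊢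
  refine ⟨IsHermitian.ext fun i j => ?_, fun x => (hS.2 fun i => x i).trans_eq ?_⟩
  · by_cases hij : i ∈ S ∧ j ∈ S
    · exact hS.1.apply ⟨i, hij.1⟩ ⟨j, hij.2⟩
    · rw [h₀ i j (by tauto), h₀ j i (by tauto), star_zero]
  · refine Fintype.sum_of_injective _ Subtype.val_injective _ _ (fun i hi => ?_) fun i => ?_
    · simp [h₀ i _ (.inl (by simpa using hi))]
    · refine Fintype.sum_of_injective _ Subtype.val_injective _ _ (fun j hj => ?_) fun j => rfl
      simp [h₀ _ j (.inr (by simpa using hj))]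

open scoped MatrixOrder in
lemma exists_eq_gram [Fintype n] (hM : M.PosSemidef) :
    ∃ w : n → EuclideanSpace ℝ n, M = gram ℝ w := by
  classical
  obtain ⟨B, rfl⟩ := CStarAlgebra.nonneg_iff_eq_star_mul_self.1 hM.nonneg
  refine ⟨fun i => WithLp.toLp 2 (Bᵀ i), ?_⟩
  ext i j
  simp [star_eq_conjTranspose, mul_apply, gram_apply, PiLp.inner_apply, mul_comm]

lemma gram_eq_add_gram_starProjection {𝕜 E : Type*} [RCLike 𝕜] [NormedAddCommGroup E]
    [InnerProductSpace 𝕜 E] (K : Submodule 𝕜 E) [K.HasOrthogonalProjection] (w : n → E) :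
    gram 𝕜 w = gram 𝕜 (K.starProjection ∘ w) + gram 𝕜 (Kᗮ.starProjection ∘ w) := by
  have inner_self_proj : ∀ (L : Submodule 𝕜 E) [L.HasOrthogonalProjection] (u v : E),
      inner 𝕜 (L.starProjection u) (L.starProjection v) = inner 𝕜 u (L.starProjection v) :=
    fun L _ u v => by
      rw [L.inner_starProjection_left_eq_right,
        L.starProjection_eq_self_iff.2 (L.starProjection_apply_mem v)]
  ext i j
  simp only [gram_apply, Matrix.add_apply, Function.comp_apply, inner_self_proj]
  rw [← inner_add_right, K.starProjection_add_starProjection_orthogonal]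

/- With `M` the Gram matrix of `w`, project `w` onto the line through `w s` and its complement. -/
lemma exists_eq_vecMulVec_add_posSemidef [Finite n] (hM : M.PosSemidef) (s : n) :
    ∃ (ζ : n → ℝ) (N : Matrix n n ℝ),
      N.PosSemidef ∧ M = vecMulVec ζ ζ + N ∧ ∀ i j, i = s ∨ j = s → N i j = 0 := by
  have := Fintype.ofFinite n
  obtain ⟨w, rfl⟩ := exists_eq_gram hM
  set K := Submodule.span ℝ {w s}
  have hs : Kᗮ.starProjection (w s) = 0 :=
    Submodule.starProjection_orthogonalComplement_singleton_eq_zero (w s)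
  refine ⟨fun i => inner ℝ (w s) (w i) / ‖w s‖, gram ℝ (Kᗮ.starProjection ∘ w),
    posSemidef_gram _ _, ?_, ?_⟩
  · convert gram_eq_add_gram_starProjection K w using 2
    ext i j
    simp only [K, vecMulVec_apply, gram_apply, Function.comp_apply,
      Submodule.starProjection_singleton, inner_smul_left, inner_smul_right,
      real_inner_self_eq_norm_sq, RCLike.ofReal_real_eq_id, id, conj_trivial]
    field_simp
  · rintro i j (rfl | rfl) <;> simp [gram_apply, hs, -Submodule.starProjection_orthogonal_val]

lemma exists_posSemidef_add_of_block_eq_zero [Finite n] (hM : M.PosSemidef) {A B : Set n}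
    (hAB : ∀ i ∈ A, ∀ j ∈ B, M i j = 0) :
    ∃ M₁ M₂ : Matrix n n ℝ, M₁.PosSemidef ∧ M₂.PosSemidef ∧ M = M₁ + M₂ ∧
      (∀ i j, i ∈ B ∨ j ∈ B → M₁ i j = 0) ∧ ∀ i j, i ∈ A ∨ j ∈ A → M₂ i j = 0 := by
  have := Fintype.ofFinite n
  obtain ⟨w, rfl⟩ := exists_eq_gram hM
  set K := Submodule.span ℝ (w '' A)
  have ortho : ∀ ⦃u⦄, u ∈ w '' B → ∀ ⦃v⦄, v ∈ w '' A → inner ℝ u v = 0 := by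
    rintro _ ⟨j, hj, rfl⟩ _ ⟨i, hi, rfl⟩
    exact (real_inner_comm _ _).trans (hAB i hi j hj)
  have hA : ∀ i ∈ A, Kᗮ.starProjection (w i) = 0 := fun i hi =>
    (Kᗮ.starProjection_apply_eq_zero_iff).2 <|
      K.le_orthogonal_orthogonal (Submodule.subset_span (mem_image_of_mem w hi))
  have hB : ∀ j ∈ B, K.starProjection (w j) = 0 := fun j hj =>
    (K.starProjection_apply_eq_zero_iff).2 <|
      Submodule.isOrtho_span.2 ortho (Submodule.subset_span (mem_image_of_mem w hj))
  refine ⟨gram ℝ (K.starProjection ∘ w), gram ℝ (Kᗮ.starProjection ∘ w), posSemidef_gram _ _,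
    posSemidef_gram _ _, gram_eq_add_gram_starProjection K w, ?_, ?_⟩
  · rintro i j (hi | hj) <;> simp [gram_apply, *]
  · rintro i j (hi | hj) <;> simp [gram_apply, *, -Submodule.starProjection_orthogonal_val]

end PosSemidef

section Entrywise

variable {n : Type*} {f f' : ℝ → ℝ}

/-- The entrywise map `f[-]` preserves positive semidefiniteness of matrices indexed by `n`. -/
def PreservesPosSemidef (n : Type*) (f : ℝ → ℝ) : Prop :=
  ∀ ⦃M : Matrix n n ℝ⦄, M.PosSemidef → (M.map f).PosSemidef

/-- The entrywise map `f[-]` is monotone for the Loewner order on the positive semidefinite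
matrices indexed by `n`; a larger matrix is written as `P + N`. -/
def LoewnerMonotone (n : Type*) (f : ℝ → ℝ) : Prop :=
  ∀ ⦃P N : Matrix n n ℝ⦄, P.PosSemidef → N.PosSemidef → ((P + N).map f - P.map f).PosSemidef

/-- The entrywise map `f[-]` is superadditive for the Loewner order on the positive semidefinite
matrices indexed by `n`. -/
def LoewnerSuperadditive (n : Type*) (f : ℝ → ℝ) : Prop :=
  ∀ ⦃P N : Matrix n n ℝ⦄, P.PosSemidef → N.PosSemidef →
    ((P + N).map f - P.map f - N.map f).PosSemidef

lemma preservesPosSemidef_pow [Finite n] (d : ℕ) : PreservesPosSemidef n (· ^ d) := by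
  intro M hM
  induction d with
  | zero =>
    convert posSemidef_vecMulVec_self (1 : n → ℝ) using 1
    ext i j
    simp [vecMulVec_apply]
  | succ d ih =>
    have hsucc : M.map (· ^ (d + 1)) = M.map (· ^ d) ⊙ M := by
      ext i j
      exact pow_succ _ _
    exact hsucc ▸ ih.hadamard hM

lemma PreservesPosSemidef.const_mul (hf : PreservesPosSemidef n f) {c : ℝ} (hc : 0 ≤ c) :
    PreservesPosSemidef n fun x => c * f x := fun _ hM => (hf hM).smul hc

lemma LoewnerMonotone.const_mul (hf : LoewnerMonotone n f) {c : ℝ} (hc : 0 ≤ c) :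
    LoewnerMonotone n fun x => c * f x := by
  intro P N hP hN
  convert (hf hP hN).smul hc using 1
  ext i j
  simp [mul_sub]

lemma LoewnerMonotone.of_subsingleton [Subsingleton n] (hf : MonotoneOn f (Ici 0)) :
    LoewnerMonotone n f := fun _ _ hP hN =>
  posSemidef_of_subsingleton fun _ => sub_nonneg.2 <|
    hf hP.diag_nonneg (hP.add hN).diag_nonneg (le_add_of_nonneg_right hN.diag_nonneg)

lemma LoewnerSuperadditive.of_subsingleton [Subsingleton n]
    (hf : ∀ ⦃x y⦄, 0 ≤ x → 0 ≤ y → f x + f y ≤ f (x + y)) : LoewnerSuperadditive n f :=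
  fun _ _ hP hN => posSemidef_of_subsingleton fun i =>
    (sub_nonneg.2 (hf (hP.diag_nonneg (i := i)) (hN.diag_nonneg (i := i)))).trans_eq
      (sub_add_eq_sub_sub _ _ _)

lemma LoewnerSuperadditive.of_isEmpty [IsEmpty n] : LoewnerSuperadditive n f :=
  fun _ _ _ _ => posSemidef_of_subsingleton isEmptyElim

lemma isClosed_setOf_loewnerSuperadditive : IsClosed {f | LoewnerSuperadditive n f} := by
  simp only [LoewnerSuperadditive, ofPred_forall]
  refine isClosed_iInter fun P => isClosed_iInter fun N => isClosed_iInter fun _ =>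
    isClosed_iInter fun _ => isClosed_setOf_posSemidef.preimage ?_
  exact continuous_matrix fun i j => by simp only [Matrix.sub_apply, Matrix.map_apply]; fun_prop

lemma posSemidef_sub_of_hasDerivAt [Finite n] {D D' : ℝ → Matrix n n ℝ}
    (hD : ∀ t i j, HasDerivAt (fun s => D s i j) (D' t i j) t)
    (hD' : ∀ t ∈ Ioo (0 : ℝ) 1, (D' t).PosSemidef) (hH : (D 1 - D 0).IsHermitian) :
    (D 1 - D 0).PosSemidef := by
  have := Fintype.ofFinite n
  refine posSemidef_iff_sum_nonneg.2 ⟨hH, fun x => ?_⟩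
  set q : ℝ → ℝ := fun t => ∑ i, ∑ j, x i * D t i j * x j with hq
  have hderiv : ∀ t, HasDerivAt q (∑ i, ∑ j, x i * D' t i j * x j) t := fun t =>
    HasDerivAt.fun_sum fun i _ => HasDerivAt.fun_sum fun j _ =>
      ((hD t i j).const_mul (x i)).mul_const (x j)
  have hmono : MonotoneOn q (Icc 0 1) := by
    refine monotoneOn_of_deriv_nonneg (convex_Icc 0 1)
      (fun t _ => (hderiv t).continuousAt.continuousWithinAt)
      (fun t _ => (hderiv t).differentiableAt.differentiableWithinAt) fun t ht => ?_
    rw [interior_Icc] at ht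
    rw [(hderiv t).deriv]
    exact (posSemidef_iff_sum_nonneg.1 (hD' t ht)).2 x
  calc 0 ≤ q 1 - q 0 := sub_nonneg.2 (hmono (by simp) (by simp) zero_le_one)
    _ = ∑ i, ∑ j, x i * (D 1 - D 0) i j * x j := by
      simp only [hq, ← Finset.sum_sub_distrib, Matrix.sub_apply, mul_sub, sub_mul]

lemma isHermitian_map {M : Matrix n n ℝ} (hM : M.IsHermitian) (f : ℝ → ℝ) :
    (M.map f).IsHermitian := hM.map f fun _ => rfl

lemma hasDerivAt_map_add_smul (hf : ∀ x, HasDerivAt f (f' x) x) (P N : Matrix n n ℝ) (t : ℝ)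
    (i j : n) : HasDerivAt (fun s : ℝ => (P + s • N).map f i j)
      ((N ⊙ (P + t • N).map f') i j) t := by
  have hline : HasDerivAt (fun s : ℝ => P i j + s * N i j) (N i j) t := by
    simpa using ((hasDerivAt_id t).mul_const (N i j)).const_add (P i j)
  simpa [mul_comm, Function.comp_def] using (hf (P i j + t * N i j)).comp t hline

lemma LoewnerMonotone.of_hasDerivAt [Finite n] (hf : ∀ x, HasDerivAt f (f' x) x)
    (hf' : PreservesPosSemidef n f') : LoewnerMonotone n f := by
  intro P N hP hN
  have h := posSemidef_sub_of_hasDerivAt (D := fun t => (P + t • N).map f)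
    (hasDerivAt_map_add_smul hf P N)
    (fun t ht => hN.hadamard (hf' (hP.add (hN.smul ht.1.le))))
  simp only [one_smul, zero_smul, add_zero] at h
  exact h ((isHermitian_map (hP.add hN).1 f).sub (isHermitian_map hP.1 f))

/- Differentiate `f[P + t N] - f[t N]` in `t`. -/
lemma LoewnerSuperadditive.of_hasDerivAt [Finite n] (h₀ : f 0 = 0)
    (hf : ∀ x, HasDerivAt f (f' x) x) (hf' : LoewnerMonotone n f') :
    LoewnerSuperadditive n f := by
  intro P N hP hN
  have h := posSemidef_sub_of_hasDerivAt
    (D := fun t => (P + t • N).map f - (0 + t • N).map f)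
    (D' := fun t => N ⊙ ((P + t • N).map f' - (0 + t • N).map f'))
    (fun t i j => ((hasDerivAt_map_add_smul hf P N t i j).sub
      (hasDerivAt_map_add_smul hf 0 N t i j)).congr_deriv (mul_sub _ _ _).symm)
    (fun t ht => by
      rw [add_comm P, zero_add]
      exact hN.hadamard (hf' (hN.smul ht.1.le) hP))
  have hzero : (0 : Matrix n n ℝ).map f = 0 := Matrix.map_zero f h₀
  simp only [one_smul, zero_smul, add_zero, zero_add, hzero, sub_zero] at h
  rw [sub_right_comm]
  exact h (((isHermitian_map (hP.add hN).1 f).sub (isHermitian_map hN.1 f)).sub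
    (isHermitian_map hP.1 f))

/- Split off the rank-one part `ζ ζᵀ` of `M` through `s`: then `f[ζ ζᵀ]` has rank one, and
`f[M] - f[ζ ζᵀ]` vanishes on the row and column of `s`. -/
lemma PreservesPosSemidef.of_loewnerMonotone_ne [Finite n] (hmul : ∀ x y, f (x * y) = f x * f y)
    (s : n) (hf : LoewnerMonotone {i // i ≠ s} f) : PreservesPosSemidef n f := by
  intro M hM
  obtain ⟨ζ, N, hN, rfl, hNs⟩ := exists_eq_vecMulVec_add_posSemidef hM s
  have hrank : (vecMulVec ζ ζ).map f = vecMulVec (f ∘ ζ) (f ∘ ζ) := by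
    ext i j
    exact hmul _ _
  have hdiff : ((vecMulVec ζ ζ + N).map f - (vecMulVec ζ ζ).map f).PosSemidef := by
    refine posSemidef_of_submatrix (S := {i | i ≠ s}) (fun i j hij => ?_) ?_
    · simp [hNs i j (by simpa using hij)]
    · exact hf ((posSemidef_vecMulVec_self ζ).submatrix _) (hN.submatrix _)
  rw [← sub_add_cancel ((vecMulVec ζ ζ + N).map f) ((vecMulVec ζ ζ).map f)]
  exact hdiff.add (hrank ▸ posSemidef_vecMulVec_self _)

theorem preservesPosSemidef_rpowExt [Fintype n] (ε : ℤˣ) {α : ℝ} (hα : 0 < α)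
    (hn : Fintype.card n < α + 2) : PreservesPosSemidef n (rpowExt ε α) := by
  classical
  induction hk : Fintype.card n generalizing n ε α with
  | zero =>
    have := Fintype.card_eq_zero_iff.1 hk
    exact fun _ _ => posSemidef_of_subsingleton isEmptyElim
  | succ k ih =>
    obtain ⟨s⟩ : Nonempty n := Fintype.card_pos_iff.1 (hk ▸ k.succ_pos)
    have hcard : Fintype.card {i // i ≠ s} = k := by simp [hk]
    rw [hk] at hn
    push_cast at hn
    refine .of_loewnerMonotone_ne (rpowExt_mul ε α) s ?_
    rcases subsingleton_or_nontrivial {i // i ≠ s} with _ | _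
    · exact .of_subsingleton (monotoneOn_rpowExt ε hα.le)
    · have hk₂ : (2 : ℝ) ≤ k := by exact_mod_cast hcard ▸ Fintype.one_lt_card
      have hα₁ : 1 < α := by linarith
      exact .of_hasDerivAt (hasDerivAt_rpowExt ε hα₁)
        ((ih (-ε) (sub_pos.2 hα₁) (by rw [hcard]; linarith) hcard).const_mul hα.le)

theorem loewnerSuperadditive_rpowExt [Fintype n] [Nonempty n] (ε : ℤˣ) {α : ℝ}
    (hα : Fintype.card n ≤ α) : LoewnerSuperadditive n (rpowExt ε α) := by
  rcases subsingleton_or_nontrivial n with _ | _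
  · have hn₁ : (1 : ℝ) ≤ Fintype.card n := by exact_mod_cast Fintype.card_pos
    exact .of_subsingleton fun _ _ => rpowExt_add_le ε (hn₁.trans hα)
  have hn₂ : (2 : ℝ) ≤ Fintype.card n := by exact_mod_cast Fintype.one_lt_card
  have of_gt : ∀ β ∈ Ioi α, LoewnerSuperadditive n (rpowExt ε β) := fun β (hβ : α < β) =>
    have hβ₁ : 0 < β - 1 - 1 := by linarith
    .of_hasDerivAt (rpowExt_zero ε β) (hasDerivAt_rpowExt ε (by linarith)) <|
      .const_mul (.of_hasDerivAt (hasDerivAt_rpowExt _ (by linarith)) <|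
        (preservesPosSemidef_rpowExt _ hβ₁ (by linarith)).const_mul (by linarith)) (by linarith)
  have htendsto : Filter.Tendsto (rpowExt ε) (nhdsWithin α (Ioi α)) (nhds (rpowExt ε α)) :=
    (continuous_pi (continuous_rpowExt_exponent ε)).continuousWithinAt
  exact isClosed_setOf_loewnerSuperadditive.mem_of_tendsto htendsto
    (Filter.eventually_of_mem self_mem_nhdsWithin of_gt)

end Entrywise

section SchurComplement

/-- The entrywise map `f[-]` is superadditive for the Loewner order on pairs of rank-one matrices
`u uᵀ`, `v vᵀ`, where `f[u uᵀ]` is replaced by `f[u] f[u]ᵀ`, the same matrix when `f` is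
multiplicative. -/
def RankOneSuperadditive (n : Type*) (f : ℝ → ℝ) : Prop :=
  ∀ u v : n → ℝ, ((vecMulVec u u + vecMulVec v v).map f -
    vecMulVec (f ∘ u) (f ∘ u) - vecMulVec (f ∘ v) (f ∘ v)).PosSemidef

lemma RankOneSuperadditive.comp {m n : Type*} {f : ℝ → ℝ} (h : RankOneSuperadditive n f)
    {e : m → n} (he : Function.Injective e) : RankOneSuperadditive m f := by
  intro u v
  have := (h (Function.extend e u 0) (Function.extend e v 0)).submatrix e
  convert this using 1
  ext i j
  simp [vecMulVec_apply, he.extend_apply]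

lemma posSemidef_sub_of_fromBlocks_one {n : Type*} [Finite n] {D : Matrix n n ℝ} {a b : n → ℝ}
    (h : (fromBlocks 1 (of ![a, b]) (of ![a, b])ᵀ D).PosSemidef) :
    (D - vecMulVec a a - vecMulVec b b).PosSemidef := by
  have : Invertible (1 : Matrix (Fin 2) (Fin 2) ℝ) := invertibleOne
  have hgram : (of ![a, b])ᴴ * (1 : Matrix (Fin 2) (Fin 2) ℝ)⁻¹ * of ![a, b] =
      vecMulVec a a + vecMulVec b b := by
    ext i j
    simp [mul_apply, vecMulVec_apply, Fin.sum_univ_two]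
  rw [sub_sub, ← hgram]
  exact (PosDef.fromBlocks₁₁ (of ![a, b]) D PosDef.one).1 h

end SchurComplement

section Graph

variable {V : Type*} {G : SimpleGraph V} {A B C S : Set V} {f : ℝ → ℝ}

namespace IsDecomposition

lemma symm (h : IsDecomposition G A C B) : IsDecomposition G B C A := by
  obtain ⟨cover, hAC, hAB, hCB, separates, clique⟩ := h
  refine ⟨fun v => by have := cover v; tauto, hCB.symm, hAB.symm, hAC.symm,
    fun b hb a ha p => ?_, clique⟩
  simpa using separates a ha b hb p.reverse

lemma isClique (h : IsDecomposition G A C B) : G.IsClique C :=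
  fun _ hc₁ _ hc₂ => h.2.2.2.2.2 _ hc₁ _ hc₂

lemma not_adj (h : IsDecomposition G A C B) {a b : V} (ha : a ∈ A) (hb : b ∈ B) :
    ¬ G.Adj a b := by
  obtain ⟨-, hAC, -, hCB, separates, -⟩ := h
  intro hab
  obtain ⟨c, hc, hcab⟩ := separates a ha b hb hab.toWalk
  rcases (by simpa using hcab : c = a ∨ c = b) with rfl | rfl
  exacts [hAC.notMem_of_mem_left ha hc, hCB.notMem_of_mem_left hc hb]

lemma mem_of_notMem_union (h : IsDecomposition G A C B) {v : V} (hv : v ∉ A ∪ C) : v ∈ B := by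
  have := h.1 v
  simp only [mem_union] at hv
  tauto

lemma notMem_union_or_notMem_union (h : IsDecomposition G A C B) {v : V} (hv : v ∉ C) :
    v ∉ A ∪ C ∨ v ∉ B ∪ C := by
  have := h.2.2.1.notMem_of_mem_left (a := v)
  simp only [mem_union]
  tauto

lemma eq_zero_or_eq_zero (h : IsDecomposition G A C B) {M₁ M₂ : Matrix V V ℝ}
    (h₁ : ∀ i j, i ∉ A ∪ C ∨ j ∉ A ∪ C → M₁ i j = 0)
    (h₂ : ∀ i j, i ∉ B ∪ C ∨ j ∉ B ∪ C → M₂ i j = 0) {i j : V} (hij : i ∉ C ∨ j ∉ C) :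
    M₁ i j = 0 ∨ M₂ i j = 0 := by
  rcases hij with hi | hj
  · exact (h.notMem_union_or_notMem_union hi).imp (fun hi => h₁ i j (.inl hi))
      fun hi => h₂ i j (.inl hi)
  · exact (h.notMem_union_or_notMem_union hj).imp (fun hj => h₁ i j (.inr hj))
      fun hj => h₂ i j (.inr hj)

end IsDecomposition

lemma exists_extension_apply_eq_one {v : V} (hv : v ∉ C) (u : C → ℝ) :
    ∃ p : V → ℝ, p v = 1 ∧ (∀ c : C, p c = u c) ∧ ∀ i ∉ insert v C, p i = 0 := by
  classical
  refine ⟨Function.update (Function.extend (↑) u 0) v 1, by simp, fun c => ?_, fun i hi => ?_⟩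
  · rw [Function.update_of_ne (ne_of_mem_of_not_mem c.2 hv), Subtype.val_injective.extend_apply]
  · rw [mem_insert_iff, not_or] at hi
    rw [Function.update_of_ne hi.1, Function.extend_apply' _ _ _ (by simpa using hi.2),
      Pi.zero_apply]

variable [Fintype V]

lemma psetSub_subset_psetG : PsetSub G S ⊆ PsetG G univ := fun _ hM => ⟨hM.1, by simp, hM.2.2⟩

lemma vecMulVec_mem_psetSub {K : Set V} (hK : G.IsClique K) (hKS : K ⊆ S) {p : V → ℝ}
    (hp : ∀ i ∉ K, p i = 0) : vecMulVec p p ∈ PsetSub G S := by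
  refine ⟨posSemidef_vecMulVec_self p, ?_, fun i j hij hadj => ?_⟩
  · rintro i j (hi | hj)
    · simp [vecMulVec_apply, hp i (mt (@hKS i) hi)]
    · simp [vecMulVec_apply, hp j (mt (@hKS j) hj)]
  · by_cases hi : i ∈ K
    · have hj : j ∉ K := fun hj => hadj (hK hi hj hij)
      simp [vecMulVec_apply, hp j hj]
    · simp [vecMulVec_apply, hp i hi]

lemma add_mem_psetSub {M N : Matrix V V ℝ} (hM : M ∈ PsetSub G S) (hN : N ∈ PsetSub G S) :
    M + N ∈ PsetSub G S := by
  refine ⟨hM.1.add hN.1, fun i j h => ?_, fun i j hij h => ?_⟩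
  · simp [hM.2.1 i j h, hN.2.1 i j h]
  · simp [hM.2.2 i j hij h, hN.2.2 i j hij h]

lemma IsDecomposition.exists_eq_add_of_mem_psetG (h : IsDecomposition G A C B)
    {M : Matrix V V ℝ} (hM : M ∈ PsetG G univ) :
    ∃ M₁ ∈ PsetSub G (A ∪ C), ∃ M₂ ∈ PsetSub G (B ∪ C), M = M₁ + M₂ := by
  obtain ⟨hM, -, hMG⟩ := hM
  obtain ⟨M₁, M₂, hM₁, hM₂, rfl, h₁, h₂⟩ :=
    exists_posSemidef_add_of_block_eq_zero hM fun i hi j hj =>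
      hMG i j (h.2.2.1.ne_of_mem hi hj) (h.not_adj hi hj)
  replace h₁ : ∀ i j, i ∉ A ∪ C ∨ j ∉ A ∪ C → M₁ i j = 0 := fun i j hij =>
    h₁ i j (hij.imp h.mem_of_notMem_union h.mem_of_notMem_union)
  replace h₂ : ∀ i j, i ∉ B ∪ C ∨ j ∉ B ∪ C → M₂ i j = 0 := fun i j hij =>
    h₂ i j (hij.imp h.symm.mem_of_notMem_union h.symm.mem_of_notMem_union)
  have both_zero : ∀ i j, i ≠ j → ¬ G.Adj i j → M₁ i j = 0 ∧ M₂ i j = 0 := fun i j hij hadj => by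
    have hsum : M₁ i j + M₂ i j = 0 := hMG i j hij hadj
    have hnotMem : i ∉ C ∨ j ∉ C := by
      by_contra! hC
      exact hadj (h.isClique hC.1 hC.2 hij)
    rcases h.eq_zero_or_eq_zero h₁ h₂ hnotMem with hzero | hzero <;> simp_all
  exact ⟨M₁, ⟨hM₁, h₁, fun i j hij hadj => (both_zero i j hij hadj).1⟩,
    M₂, ⟨hM₂, h₂, fun i j hij hadj => (both_zero i j hij hadj).2⟩, rfl⟩

theorem IsDecomposition.posSemidef_map_of_loewnerSuperadditive (h : IsDecomposition G A C B)
    (h₀ : f 0 = 0) (hC : LoewnerSuperadditive C f)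
    (hA : ∀ M ∈ PsetSub G (A ∪ C), (M.map f).PosSemidef)
    (hB : ∀ M ∈ PsetSub G (B ∪ C), (M.map f).PosSemidef) {M : Matrix V V ℝ}
    (hM : M ∈ PsetG G univ) : (M.map f).PosSemidef := by
  obtain ⟨M₁, hM₁, M₂, hM₂, rfl⟩ := h.exists_eq_add_of_mem_psetG hM
  have hdiff : ((M₁ + M₂).map f - M₁.map f - M₂.map f).PosSemidef := by
    refine posSemidef_of_submatrix (S := C) (fun i j hij => ?_) ?_
    · rcases h.eq_zero_or_eq_zero hM₁.2.1 hM₂.2.1 hij with hzero | hzero <;> simp [hzero, h₀]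
    · exact hC (hM₁.1.submatrix _) (hM₂.1.submatrix _)
  simpa using (hdiff.add (hB M₂ hM₂)).add (hA M₁ hM₁)

/- Extend `u` by `1` at `v₁` and `v` by `1` at `v₂`, and take the Schur complement of the identity
block on `{v₁, v₂}`. -/
theorem rankOneSuperadditive_of_posSemidef_map (hC : G.IsClique C) {v₁ v₂ : V} (hv₁ : v₁ ∉ C)
    (hv₂ : v₂ ∉ C) (hne : v₁ ≠ v₂) (h₁ : ∀ c ∈ C, G.Adj v₁ c) (h₂ : ∀ c ∈ C, G.Adj v₂ c)
    (hf₀ : f 0 = 0) (hf₁ : f 1 = 1) (hf : ∀ M ∈ PsetG G univ, (M.map f).PosSemidef) :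
    RankOneSuperadditive C f := by
  intro u v
  obtain ⟨p, hp₁, hpC, hp⟩ := exists_extension_apply_eq_one hv₁ u
  obtain ⟨q, hq₂, hqC, hq⟩ := exists_extension_apply_eq_one hv₂ v
  have hp₂ : p v₂ = 0 := hp v₂ (by simp [hne.symm, hv₂])
  have hq₁ : q v₁ = 0 := hq v₁ (by simp [hne, hv₁])
  have hM : vecMulVec p p + vecMulVec q q ∈ PsetSub G univ := add_mem_psetSub
    (vecMulVec_mem_psetSub (hC.insert fun c hc _ => h₁ c hc) (subset_univ _) hp)
    (vecMulVec_mem_psetSub (hC.insert fun c hc _ => h₂ c hc) (subset_univ _) hq)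
  apply posSemidef_sub_of_fromBlocks_one
  convert (hf _ (psetSub_subset_psetG hM)).submatrix (Sum.elim ![v₁, v₂] Subtype.val) using 1
  ext (i | i) (j | j)
  · fin_cases i <;> fin_cases j <;> simp [vecMulVec_apply, hp₁, hp₂, hq₁, hq₂, hf₀, hf₁]
  · fin_cases i <;> simp [vecMulVec_apply, hp₁, hp₂, hq₁, hq₂, hpC, hqC]
  · fin_cases j <;> simp [vecMulVec_apply, hp₁, hp₂, hq₁, hq₂, hpC, hqC]
  · simp [vecMulVec_apply, hpC, hqC]

lemma nonneg_of_posSemidef_map_rpowExt {ε : ℤˣ} {α : ℝ} {i j : V} (hij : G.Adj i j) (hi : i ∈ S)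
    (hj : j ∈ S) (hf : ∀ M ∈ PsetSub G S, (M.map (rpowExt ε α)).PosSemidef) : 0 ≤ α := by
  classical
  have hne := hij.ne
  have hM : vecMulVec (Pi.single i 1 + Pi.single j 1) (Pi.single i 1 + Pi.single j 1) +
      vecMulVec (Pi.single i 1) (Pi.single i 1) ∈ PsetSub G S :=
    add_mem_psetSub
      (vecMulVec_mem_psetSub (K := {i, j}) (SimpleGraph.isClique_pair.2 fun _ => hij)
        (pair_subset hi hj) (by simp +contextual))
      (vecMulVec_mem_psetSub (K := {i}) (SimpleGraph.isClique_singleton i)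
        (singleton_subset_iff.2 hi) (by simp +contextual))
  have hdet := ((hf _ hM).submatrix ![i, j]).det_nonneg
  have htwo : (1 : ℝ) ≤ 2 ^ α := by
    rw [det_fin_two] at hdet
    simpa [vecMulVec_apply, hne, hne.symm, one_add_one_eq_two, rpowExt_of_pos] using hdet
  exact (Real.rpow_le_rpow_left_iff one_lt_two).1 (by rwa [Real.rpow_zero])

end Graph

section Rigidity

open Asymptotics Filter Polynomial Topology

variable {ι : Type*} [Fintype ι] {f : ℝ → ℝ} {m : ℕ} {p : ℝ[X]} {x w : ι → ℝ}

lemma sum_sum_mul_eval_mul (hp : p.natDegree ≤ m)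
    (hmoment : ∀ k ∈ Finset.Icc 1 m, ∑ i, w i * x i ^ k = 0) :
    ∑ i, ∑ j, w i * w j * p.eval (x i * x j) = p.coeff 0 * (∑ i, w i) ^ 2 := by
  have hsq : ∀ k, ∑ i, ∑ j, w i * w j * (p.coeff k * (x i * x j) ^ k) =
      p.coeff k * (∑ i, w i * x i ^ k) ^ 2 := fun k => by
    rw [sq, Finset.sum_mul_sum, Finset.mul_sum]
    exact Finset.sum_congr rfl fun i _ => by
      rw [Finset.mul_sum]
      exact Finset.sum_congr rfl fun j _ => by ring
  calc ∑ i, ∑ j, w i * w j * p.eval (x i * x j)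
      = ∑ k ∈ Finset.range (m + 1), ∑ i, ∑ j, w i * w j * (p.coeff k * (x i * x j) ^ k) := by
        simp only [p.eval_eq_sum_range' (Nat.lt_succ_of_le hp), Finset.mul_sum]
        exact (Finset.sum_congr rfl fun i _ => Finset.sum_comm).trans Finset.sum_comm
    _ = p.coeff 0 * (∑ i, w i) ^ 2 := by
        simp only [hsq]
        rw [Finset.sum_range_succ', Finset.sum_eq_zero fun k hk => ?_]
        · simp
        · rw [hmoment (k + 1) (by simp at hk ⊢; lia)]
          simp

/- Test superadditivity at `u = 1` and `v = x` on the vector `w`. -/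
lemma RankOneSuperadditive.sq_sum_mul_le (h : RankOneSuperadditive ι f) (hf₁ : f 1 = 1)
    (hp : p.natDegree ≤ m) (hp₀ : p.coeff 0 = 1)
    (hmoment : ∀ k ∈ Finset.Icc 1 m, ∑ i, w i * x i ^ k = 0) :
    (∑ i, w i * f (x i)) ^ 2 ≤
      ∑ i, ∑ j, w i * w j * (f (1 + x i * x j) - p.eval (x i * x j)) := by
  have hquad := (posSemidef_iff_sum_nonneg.1 (h 1 x)).2 w
  calc (∑ i, w i * f (x i)) ^ 2
      ≤ (∑ i, w i * f (x i)) ^ 2 +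
          ∑ i, ∑ j, w i * (f (1 + x i * x j) - 1 - f (x i) * f (x j)) * w j :=
        le_add_of_nonneg_right (by simpa [vecMulVec_apply, hf₁] using hquad)
    _ = ∑ i, ∑ j, w i * w j * f (1 + x i * x j) - 1 * (∑ i, w i) ^ 2 := by
        simp only [sq, one_mul, Finset.sum_mul_sum, ← Finset.sum_add_distrib,
          ← Finset.sum_sub_distrib]
        exact Finset.sum_congr rfl fun i _ => Finset.sum_congr rfl fun j _ => by ring
    _ = ∑ i, ∑ j, w i * w j * (f (1 + x i * x j) - p.eval (x i * x j)) := by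
        rw [← hp₀, ← sum_sum_mul_eval_mul hp hmoment]
        simp only [mul_sub, Finset.sum_sub_distrib]

lemma RankOneSuperadditive.isBigO_sum_mul (h : RankOneSuperadditive ι f) (hf₁ : f 1 = 1)
    (hp : p.natDegree ≤ m)
    (htaylor : (fun y => f (1 + y) - p.eval y) =O[𝓝 0] fun y => y ^ (m + 1))
    (hmoment : ∀ k ∈ Finset.Icc 1 m, ∑ i, w i * x i ^ k = 0) :
    (fun s => ∑ i, w i * f (s * x i)) =O[𝓝 0] fun s => s ^ (m + 1) := by
  set R : ℝ → ℝ := fun y => f (1 + y) - p.eval y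
  have hp₀ : p.coeff 0 = 1 := by
    have hR₀ : f (1 + 0) - p.eval 0 = 0 := htaylor.eq_zero_imp.self_of_nhds (by simp)
    rw [add_zero, hf₁, sub_eq_zero] at hR₀
    rw [coeff_zero_eq_eval_zero, hR₀]
  have hscaled : ∀ s, ∀ k ∈ Finset.Icc 1 m, ∑ i, w i * (s * x i) ^ k = 0 := fun s k hk => by
    simp only [mul_pow, mul_left_comm (w _), ← Finset.mul_sum, hmoment k hk, mul_zero]
  have hR_comp : ∀ a b : ℝ, (fun s => R (s * a * (s * b))) =O[𝓝 0]
      fun s => (s ^ (m + 1)) ^ 2 := fun a b => by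
    have htendsto : Tendsto (fun s : ℝ => s * a * (s * b)) (𝓝 0) (𝓝 0) :=
      Continuous.tendsto' (by fun_prop) _ _ (by simp)
    refine (htaylor.comp_tendsto htendsto).trans <|
      ((isBigO_refl _ _).const_mul_left ((a * b) ^ (m + 1))).congr_left fun s => ?_
    simp only [Function.comp_apply]
    ring
  have hsum : (fun s => ∑ i, ∑ j, w i * w j * R (s * x i * (s * x j))) =O[𝓝 0]
      fun s => (s ^ (m + 1)) ^ 2 :=
    .fun_sum fun i _ => .fun_sum fun j _ => (hR_comp (x i) (x j)).const_mul_left (w i * w j)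
  refine .of_pow two_ne_zero (.trans (.of_norm_le fun s => ?_) hsum.norm_left)
  rw [Pi.pow_apply, Real.norm_of_nonneg (sq_nonneg _)]
  exact (h.sq_sum_mul_le hf₁ hp hp₀ (hscaled s)).trans (le_abs_self _)

lemma exists_isBigO_rpowExt_one_add_sub_eval (ε : ℤˣ) (α : ℝ) (m : ℕ) :
    ∃ p : ℝ[X], p.natDegree ≤ m ∧
      (fun y => rpowExt ε α (1 + y) - p.eval y) =O[𝓝 0] fun y => y ^ (m + 1) := by
  refine ⟨∑ k ∈ Finset.range (m + 1), C (Ring.choose α k) * X ^ k, ?_, ?_⟩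
  · exact natDegree_sum_le_of_forall_le _ _ fun k hk =>
      (natDegree_C_mul_X_pow_le _ k).trans (Finset.mem_range_succ_iff.1 hk)
  · have h := (Real.one_add_rpow_hasFPowerSeriesAt_zero (a := α)).isBigO_sub_partialSum_pow (m + 1)
    simp only [zero_add, FormalMultilinearSeries.partialSum, binomialSeries_apply] at h
    refine (h.congr' ?_ .rfl).trans (isBigO_of_le _ fun y => by simp)
    have hpos : ∀ᶠ y : ℝ in 𝓝 0, -1 < y := lt_mem_nhds (by norm_num)
    filter_upwards [hpos] with y hy
    rw [rpowExt_of_pos ε α (by linarith)]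
    simp [eval_finsetSum]

/- The coefficients of `∏ (X - c ^ k)`, as weights at the nodes `c ^ i`, annihilate the monomials
of degrees `1, …, m`, and pair with the multiplicative function `f` to `∏ (f c - c ^ k)`. -/
lemma exists_nodes_weights_sum_mul_eq_prod (hf : ∀ x y, f (x * y) = f x * f y) (hf₁ : f 1 = 1)
    (m : ℕ) (c : ℝ) : ∃ x w : Fin (m + 1) → ℝ,
      (∀ k ∈ Finset.Icc 1 m, ∑ i, w i * x i ^ k = 0) ∧
      ∑ i, w i * f (x i) = ∏ k ∈ Finset.Icc 1 m, (f c - c ^ k) := by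
  set q : ℝ[X] := ∏ k ∈ Finset.Icc 1 m, (X - C (c ^ k)) with hq
  have hdeg : q.natDegree < m + 1 := by
    rw [hq, natDegree_finsetProd_X_sub_C_eq_card]
    simp
  have eval_q : ∀ y, ∑ i : Fin (m + 1), q.coeff i * y ^ (i : ℕ) = q.eval y := fun y => by
    rw [q.eval_eq_sum_range' hdeg, Finset.sum_range]
  have f_pow : ∀ i : ℕ, f (c ^ i) = f c ^ i := fun i => by
    induction i with
    | zero => simpa using hf₁
    | succ i ih => rw [pow_succ, hf, ih, pow_succ]
  refine ⟨fun i => c ^ (i : ℕ), fun i => q.coeff i, fun k hk => ?_, ?_⟩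
  · simp only [pow_right_comm c _ k, eval_q]
    simp only [hq, eval_prod, eval_sub, eval_X, eval_C]
    exact Finset.prod_eq_zero hk (sub_self _)
  · simp only [f_pow, eval_q]
    simp [hq, eval_prod]

lemma RankOneSuperadditive.sum_mul_rpowExt_eq_zero {ε : ℤˣ} {α : ℝ}
    (h : RankOneSuperadditive ι (rpowExt ε α)) (hα : α < m + 1)
    (hmoment : ∀ k ∈ Finset.Icc 1 m, ∑ i, w i * x i ^ k = 0) :
    ∑ i, w i * rpowExt ε α (x i) = 0 := by
  obtain ⟨p, hp, htaylor⟩ := exists_isBigO_rpowExt_one_add_sub_eval ε α m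
  have hO : (fun s : ℝ => s ^ α * ∑ i, w i * rpowExt ε α (x i)) =O[𝓝[>] 0]
      fun s => s ^ (m + 1) := by
    refine ((h.isBigO_sum_mul (rpowExt_one ε α) hp htaylor hmoment).mono
      nhdsWithin_le_nhds).congr' ?_ .rfl
    filter_upwards [self_mem_nhdsWithin] with s hs
    simp only [rpowExt_mul, rpowExt_of_pos ε α hs, Finset.mul_sum, mul_left_comm]
  have hlim : Tendsto (fun s : ℝ => s ^ (m + 1 - α)) (𝓝[>] 0) (𝓝 0) := by
    have hexp : 0 < m + 1 - α := sub_pos.2 hα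
    exact ((Real.continuous_rpow_const hexp.le).tendsto' 0 0
      (Real.zero_rpow hexp.ne')).mono_left nhdsWithin_le_nhds
  have hsum : (fun _ : ℝ => ∑ i, w i * rpowExt ε α (x i)) =O[𝓝[>] 0]
      fun s => s ^ (m + 1 - α) := by
    refine ((isBigO_refl (fun s : ℝ => s ^ (-α)) _).mul hO).congr' ?_ ?_
    · filter_upwards [self_mem_nhdsWithin] with s (hs : 0 < s)
      rw [← mul_assoc, ← Real.rpow_add hs, neg_add_cancel, Real.rpow_zero, one_mul]
    · filter_upwards [self_mem_nhdsWithin] with s (hs : 0 < s)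
      rw [← Real.rpow_natCast, ← Real.rpow_add hs, Nat.cast_succ, neg_add_eq_sub]
  exact tendsto_nhds_unique tendsto_const_nhds (hsum.trans_tendsto hlim)

theorem RankOneSuperadditive.exists_rpowExt_eq_pow [Nonempty ι] {ε : ℤˣ} {α : ℝ}
    (h : RankOneSuperadditive ι (rpowExt ε α)) (hα : α < Fintype.card ι) :
    ∃ d : ℕ, rpowExt ε α = (· ^ d) := by
  obtain ⟨m, hm⟩ := Nat.exists_eq_succ_of_ne_zero (Fintype.card_ne_zero (α := ι))
  obtain ⟨x, w, hmoment, hprod⟩ :=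
    exists_nodes_weights_sum_mul_eq_prod (rpowExt_mul ε α) (rpowExt_one ε α) m (-2)
  have hzero := (h.comp (Fintype.equivFinOfCardEq hm).symm.injective).sum_mul_rpowExt_eq_zero
    (by simpa [hm] using hα) hmoment
  obtain ⟨d, hd, hzero⟩ := Finset.prod_eq_zero_iff.1 (hprod.symm.trans hzero)
  exact ⟨d, rpowExt_eq_pow_of_apply_neg_two (Nat.one_le_iff_ne_zero.1 (Finset.mem_Icc.1 hd).1)
    (sub_eq_zero.1 hzero)⟩

end Rigidity

/-- **Corollary 3.5**: if `(A,C,B)` is a decomposition of `G` with vertices `v₁ ∈ A`, `v₂ ∈ B`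
adjacent to every vertex of `C`, and `f = ψ_α` or `f = φ_α`, then `f[−]` preserves positivity
on `P_G` if and only if either `α` is an odd (resp. even) positive integer, or `f[−]` preserves
positivity on `P_{G_{A∪C}}` and `P_{G_{B∪C}}` and `|α| ≥ |C|`. -/
theorem decomposition_powers_iff {V : Type*} [Fintype V] (G : SimpleGraph V)
    (A C B : Set V) (hdec : IsDecomposition G A C B)
    (v₁ v₂ : V) (hv₁ : v₁ ∈ A) (hv₂ : v₂ ∈ B)
    (h₁ : ∀ c ∈ C, G.Adj v₁ c) (h₂ : ∀ c ∈ C, G.Adj v₂ c)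
    (α : ℝ) (f : ℝ → ℝ) (hf : f = psiF α ∨ f = phiF α) :
    (∀ M ∈ PsetG G univ, (M.map f).PosSemidef) ↔
      (((f = psiF α ∧ α ∈ oddNats) ∨ (f = phiF α ∧ α ∈ evenNats)) ∨
       ((∀ M ∈ PsetSub G (A ∪ C), (M.map f).PosSemidef) ∧
        (∀ M ∈ PsetSub G (B ∪ C), (M.map f).PosSemidef) ∧
        (C.ncard : ℝ) ≤ |α|)) := by
  classical
  have hne : v₁ ≠ v₂ := hdec.2.2.1.ne_of_mem hv₁ hv₂
  have hv₁C : v₁ ∉ C := hdec.2.1.notMem_of_mem_left hv₁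
  have hv₂C : v₂ ∉ C := hdec.2.2.2.1.notMem_of_mem_right hv₂
  rw [← exists_eq_pow_iff hf, ← Nat.card_coe_set_eq, Nat.card_eq_fintype_card]
  obtain ⟨ε, rfl⟩ := exists_eq_rpowExt α hf
  constructor
  · intro h
    rcases le_or_gt (Fintype.card C : ℝ) |α| with hα | hα
    · exact .inr ⟨fun M hM => h M (psetSub_subset_psetG hM),
        fun M hM => h M (psetSub_subset_psetG hM), hα⟩
    · have : Nonempty C := Fintype.card_pos_iff.1 (by exact_mod_cast (abs_nonneg α).trans_lt hα)
      exact .inl <| (rankOneSuperadditive_of_posSemidef_map hdec.isClique hv₁C hv₂C hne h₁ h₂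
        (rpowExt_zero ε α) (rpowExt_one ε α) h).exists_rpowExt_eq_pow ((le_abs_self α).trans_lt hα)
  · rintro (⟨d, hd⟩ | ⟨hA, hB, hα⟩) M hM
    · exact hd ▸ preservesPosSemidef_pow d hM.1
    refine hdec.posSemidef_map_of_loewnerSuperadditive (rpowExt_zero ε α) ?_ hA hB hM
    rcases isEmpty_or_nonempty C with _ | ⟨c, hc⟩
    · exact .of_isEmpty
    · have hα₀ := nonneg_of_posSemidef_map_rpowExt (h₁ c hc) (.inl hv₁) (.inr hc) hA
      have : Nonempty C := ⟨c, hc⟩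
      exact loewnerSuperadditive_rpowExt ε (hα.trans_eq (abs_of_nonneg hα₀))
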